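/- Let R be a U-WLL DCTRS over a signature F, t a reachable term in T(F̄,V), and σ a substitution over F̄ whose range consists of reachable terms. If Φ(σ restricted to Var(t)) = {σ'} for some substitution σ' (i.e., |Φ(σ|_{Var(t)})| = 1), then Φ( (t̂)‾ σ ) = { t̂ σ' }, where (t̂)‾ denotes the term t̂ re-embedded into T(F̄,V) via the bar mapping. -/

import Mathlib

set_option autoImplicit false

/-- First-order terms over a signature `F` and variables `V`. -/
inductive Term (F : Type) (V : Type) : Type where
  | var : V → Term F V
  | app : F → List (Term F V) → Term F V

namespace Term

variable {F V G W : Type}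

/-- Application of a substitution. -/
def subst (σ : V → Term F W) : Term F V → Term F W
  | .var x => σ x
  | .app f ts => .app f (ts.attach.map (fun ⟨t, _⟩ => subst σ t))

/-- Renaming of variables. -/
def rename (g : V → W) (t : Term F V) : Term F W := t.subst (fun x => .var (g x))

/-- Mapping of function symbols. -/
def mapF (g : F → G) : Term F V → Term G V
  | .var x => .var x
  | .app f ts => .app (g f) (ts.attach.map (fun ⟨t, _⟩ => mapF g t))

/-- Number of occurrences of the variable `x` in a term. -/
def count [DecidableEq V] (x : V) : Term F V → ℕ
  | .var y => if y = x then 1 else 0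
  | .app _ ts => (ts.attach.map (fun ⟨t, _⟩ => count x t)).sum

/-- The list of variables occurring in a term (with repetitions). -/
def varList : Term F V → List V
  | .var x => [x]
  | .app _ ts => ts.attach.flatMap (fun ⟨t, _⟩ => varList t)

/-- A term is linear if every variable occurs at most once in it. -/
def Linear [DecidableEq V] (t : Term F V) : Prop := ∀ x : V, t.count x ≤ 1

/-- Well-formedness of a term with respect to an arity assignment. -/
inductive WF (ar : F → ℕ) : Term F V → Prop where
  | var (x : V) : WF ar (.var x)
  | app (f : F) (ts : List (Term F V)) :
      ts.length = ar f → (∀ t ∈ ts, WF ar t) → WF ar (.app f ts)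

end Term

/-- Number of occurrences of `x` in a sequence of terms. -/
def seqCount {F V : Type} [DecidableEq V] (x : V) (ts : List (Term F V)) : ℕ :=
  (ts.map (Term.count x)).sum

/-- An oriented conditional rewrite rule `l → r ⇐ s1 ≈ t1, …, sk ≈ tk`. -/
structure CRule (F V : Type) : Type where
  lhs : Term F V
  rhs : Term F V
  conds : List (Term F V × Term F V)

/-- A conditional term rewriting system: a set of conditional rules. -/
abbrev CTRS (F V : Type) := Set (CRule F V)

namespace CRule

variable {F V W : Type}

/-- The sequence `l, t1, …, tk` of "pattern" terms of a rule. -/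
def pats (ρ : CRule F V) : List (Term F V) := ρ.lhs :: ρ.conds.map Prod.snd

/-- The sequence `r, s1, …, sk` of "source" terms of a rule. -/
def srcs (ρ : CRule F V) : List (Term F V) := ρ.rhs :: ρ.conds.map Prod.fst

/-- Weak left-linearity: `|l,t1,…,tk|_x = 1` for every `x ∈ Var(r,s1,…,sk)`. -/
def WLL [DecidableEq V] (ρ : CRule F V) : Prop :=
  ∀ x : V, 0 < seqCount x ρ.srcs → seqCount x ρ.pats = 1

/-- Determinism: `Var(si) ⊆ Var(l, t1, …, t_{i−1})`. -/
def Det [DecidableEq V] (ρ : CRule F V) : Prop :=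
  ∀ i : ℕ, ∀ h : i < ρ.conds.length, ∀ x : V,
    0 < Term.count x (ρ.conds.get ⟨i, h⟩).1 →
    0 < seqCount x (ρ.lhs :: (ρ.conds.take i).map Prod.snd)

/-- Type 3: `Var(r) ⊆ Var(l, s1, t1, …, sk, tk)`. -/
def Type3 [DecidableEq V] (ρ : CRule F V) : Prop :=
  ∀ x : V, 0 < Term.count x ρ.rhs →
    0 < seqCount x (ρ.lhs :: ρ.conds.flatMap (fun c => [c.1, c.2]))

/-- The left-hand side is a non-variable term. -/
def LhsNonVar (ρ : CRule F V) : Prop := ∀ x : V, ρ.lhs ≠ .var x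

/-- Renaming the variables of a rule. -/
def mapV (g : V → W) (ρ : CRule F V) : CRule F W :=
  ⟨ρ.lhs.rename g, ρ.rhs.rename g, ρ.conds.map (fun c => (c.1.rename g, c.2.rename g))⟩

end CRule

/-- `R` is a deterministic CTRS (of Type 3, left-hand sides non-variable). -/
def IsDCTRS {F V : Type} [DecidableEq V] (R : CTRS F V) : Prop :=
  ∀ ρ ∈ R, ρ.Det ∧ ρ.Type3 ∧ ρ.LhsNonVar

/-- All rules of `R` are weakly left-linear. -/
def IsWLL {F V : Type} [DecidableEq V] (R : CTRS F V) : Prop := ∀ ρ ∈ R, ρ.WLL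

/-- Closure of a relation under contexts (rewriting below the root). -/
inductive CtxStep {F V : Type} (root : Term F V → Term F V → Prop) :
    Term F V → Term F V → Prop where
  | root {s t : Term F V} : root s t → CtxStep root s t
  | congr {f : F} {pre post : List (Term F V)} {s t : Term F V} :
      CtxStep root s t →
      CtxStep root (.app f (pre ++ s :: post)) (.app f (pre ++ t :: post))

/-- A root rewrite step using a rule of `R`, conditions evaluated with `prev`. -/
def RootStep {F V : Type} (R : CTRS F V) (prev : Term F V → Term F V → Prop)
    (s t : Term F V) : Prop :=
  ∃ ρ ∈ R, ∃ σ : V → Term F V,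
    s = ρ.lhs.subst σ ∧ t = ρ.rhs.subst σ ∧
    ∀ c ∈ ρ.conds, Relation.ReflTransGen prev (c.1.subst σ) (c.2.subst σ)

/-- The level-stratified reduction relation `→_{(n),R}`. -/
def LevelStep {F V : Type} (R : CTRS F V) : ℕ → Term F V → Term F V → Prop
  | 0 => fun _ _ => False
  | n + 1 => CtxStep (RootStep R (LevelStep R n))

/-- The reduction relation `→_R = ⋃_{n} →_{(n),R}`. -/
def Red {F V : Type} (R : CTRS F V) (s t : Term F V) : Prop :=
  ∃ n : ℕ, LevelStep R n s t

/-- Many-step reduction `→*_R`. -/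
def RedStar {F V : Type} (R : CTRS F V) : Term F V → Term F V → Prop :=
  Relation.ReflTransGen (Red R)

/-- `n`-fold composition of a relation. -/
def NFold {α : Type} (r : α → α → Prop) : ℕ → α → α → Prop
  | 0 => fun a b => a = b
  | n + 1 => fun a c => ∃ b, r a b ∧ NFold r n b c

/-- One-hole contexts. -/
inductive Ctx (F V : Type) : Type where
  | hole : Ctx F V
  | app : F → List (Term F V) → Ctx F V → List (Term F V) → Ctx F V

/-- Filling the hole of a context with a term. -/
def Ctx.fill {F V : Type} : Ctx F V → Term F V → Term F V
  | .hole, t => t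
  | .app f pre C post, t => .app f (pre ++ C.fill t :: post)
/-- Signature extended with the fresh symbols `U^ρ_i`. -/
abbrev UF (F V : Type) := F ⊕ (CRule F V × ℕ)

/-- Embedding of terms over `F` into terms over the extended signature `U_R(F)`. -/
def liftF {F V : Type} (t : Term F V) : Term (UF F V) V := t.mapF Sum.inl

/-- The list `X⃗_i` enumerating `Var(l, t1, …, t_{i−1})` in a fixed order. -/
def Xlist {F V : Type} [DecidableEq V] (ρ : CRule F V) (i : ℕ) : List V :=
  (ρ.lhs.varList ++ ((ρ.conds.take (i - 1)).map Prod.snd).flatMap Term.varList).dedup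

/-- A dummy condition (used as a default, never relevant). -/
def dummyCond {F V : Type} (ρ : CRule F V) : Term F V × Term F V := (ρ.lhs, ρ.lhs)

/-- The term `U^ρ_i(t, X⃗_i)`. -/
def uterm {F V : Type} [DecidableEq V] (ρ : CRule F V) (i : ℕ) (t : Term F V) :
    Term (UF F V) V :=
  .app (Sum.inr (ρ, i)) (liftF t :: (Xlist ρ i).map Term.var)

/-- Left-hand side of the `j`-th unraveled rule of `ρ` (j = 0, …, k). -/
def ulhs {F V : Type} [DecidableEq V] (ρ : CRule F V) (j : ℕ) : Term (UF F V) V :=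
  if j = 0 then liftF ρ.lhs
  else uterm ρ j (ρ.conds.getD (j - 1) (dummyCond ρ)).2

/-- Right-hand side of the `j`-th unraveled rule of `ρ` (j = 0, …, k). -/
def urhs {F V : Type} [DecidableEq V] (ρ : CRule F V) (j : ℕ) : Term (UF F V) V :=
  if j = ρ.conds.length then liftF ρ.rhs
  else uterm ρ (j + 1) (ρ.conds.getD j (dummyCond ρ)).1

/-- The unconditional rules `U(ρ)` obtained by unraveling the rule `ρ`. -/
def URules {F V : Type} [DecidableEq V] (ρ : CRule F V) : Set (CRule (UF F V) V) :=
  { r | ∃ j ≤ ρ.conds.length, r = ⟨ulhs ρ j, urhs ρ j, []⟩ }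

/-- The simultaneous unraveling `U(R)` of a DCTRS `R`. -/
def USys {F V : Type} [DecidableEq V] (R : CTRS F V) : CTRS (UF F V) V :=
  ⋃ ρ ∈ R, URules ρ

/-- `R` is ultra-WLL (`U`-WLL): every rule of `U(R)` is WLL. -/
def IsUWLL {F V : Type} [DecidableEq V] (R : CTRS F V) : Prop :=
  ∀ r ∈ USys R, r.WLL
/-- Variables used for terms over the extended signature `F̄`: original
variables plus a countable supply of fresh variables. -/
abbrev WVar (V : Type) := V ⊕ ℕ

/-- The extended signature `F̄` of the SR transformation: the original symbols
(`c̄` for constructors, `f̄` for defined symbols, with extra arguments appended),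
the fresh constant `⊥`, the fresh unary symbol `⟨·⟩`, and the fresh tuple
symbols `[ ]^ρ_j`. -/
inductive SSym (F V : Type) : Type where
  | orig : F → SSym F V
  | bot : SSym F V
  | guard : SSym F V
  | tup : CRule F V → ℕ → SSym F V

/-- Terms over the extended signature `F̄`. -/
abbrev STerm (F V : Type) := Term (SSym F V) (WVar V)

/-- The fresh constant `⊥`. -/
def botT {F V : Type} : STerm F V := .app .bot []

/-- The fresh unary symbol `⟨·⟩`. -/
def guardT {F V : Type} (t : STerm F V) : STerm F V := .app .guard [t]

/-- `t̄`: the embedding of `t ∈ T(F,V)` into `T(F̄,V)` in which all the extra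
arguments of defined symbols are filled with `⊥`.  Here `mOf f` is the number
of conditional `f`-rules (0 for constructors). -/
def barT {F V : Type} (mOf : F → ℕ) : Term F V → STerm F V
  | .var x => .var (Sum.inl x)
  | .app f ts =>
      .app (.orig f)
        ((ts.attach.map (fun ⟨t, _⟩ => barT mOf t)) ++ List.replicate (mOf f) botT)

mutual
/-- `ext(t)`: the embedding of `t ∈ T(F,V)` into `T(F̄,V)` in which the extra
arguments of defined symbols are filled with distinct fresh variables; a
counter is threaded through to keep the fresh variables distinct. -/
def extT {F V : Type} (mOf : F → ℕ) : Term F V → ℕ → STerm F V × ℕ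
  | .var x, c => (.var (Sum.inl x), c)
  | .app f ts, c =>
      let p := extTList mOf ts c
      (.app (.orig f)
         (p.1 ++ (List.range (mOf f)).map (fun k => .var (Sum.inr (p.2 + k)))),
       p.2 + mOf f)

/-- `ext` on lists of terms, threading the fresh-variable counter. -/
def extTList {F V : Type} (mOf : F → ℕ) : List (Term F V) → ℕ → List (STerm F V) × ℕ
  | [], c => ([], c)
  | t :: ts, c =>
      let p := extT mOf t c
      let q := extTList mOf ts p.2
      (p.1 :: q.1, q.2)
end

/-- The backtranslation `t̂`: the partial mapping erasing `⟨·⟩` and the extra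
arguments of defined symbols, recovering a term over `F`. -/
def hatT {F V : Type} (ar : F → ℕ) : STerm F V → Option (Term F V)
  | .var (Sum.inl x) => some (.var x)
  | .var (Sum.inr _) => none
  | .app (.orig f) ts =>
      Option.map (Term.app f)
        ((ts.take (ar f)).attach.mapM (fun t => hatT ar t.1))
  | .app .guard [t] => hatT ar t
  | .app _ _ => none
decreasing_by
  · have h1 : t.1 ∈ ts := List.mem_of_mem_take t.2
    have := List.sizeOf_lt_of_mem h1
    simp only [Term.app.sizeOf_spec]
    omega
  · simp
    omega

/-- Embedding of `T(F,V)` into the terms over the unraveling signature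
`U_R(F)` with extended variables. -/
def liftUV {F V : Type} (t : Term F V) : Term (UF F V) (WVar V) :=
  (t.mapF Sum.inl).rename Sum.inl
/-- The list `V⃗_j` enumerating `Var(t1, …, t_{j−1})` in a fixed order. -/
def Vlist {F V : Type} [DecidableEq V] (ρ : CRule F V) (j : ℕ) : List V :=
  (((ρ.conds.take (j - 1)).map Prod.snd).flatMap Term.varList).dedup

/-- The term `[⟨inner⟩, V⃗_j]^ρ_j` (used in the rewrite rules of `SR(R)`). -/
def tupT {F V : Type} [DecidableEq V] (ρ : CRule F V) (j : ℕ) (inner : STerm F V) :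
    STerm F V :=
  .app (.tup ρ j) (guardT inner :: (Vlist ρ j).map (fun v => .var (Sum.inl v)))

/-- The `j`-th unconditional rule (j = 0, …, k) obtained by the SR
transformation from the `i`-th conditional `f`-rule
`ρ : f(w1,…,wn) → r ⇐ s1 ≈ t1, …, sk ≈ tk` (where `i = idx ρ`). -/
def condSRRule {F V : Type} [DecidableEq V] (mOf : F → ℕ) (idx : CRule F V → ℕ)
    (ρ : CRule F V) (j : ℕ) : CRule (SSym F V) (WVar V) :=
  match ρ.lhs with
  | .var _ => ⟨barT mOf ρ.lhs, barT mOf ρ.rhs, []⟩  -- irrelevant (lhs is never a variable)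
  | .app f ws =>
    let i := idx ρ
    let m := mOf f
    let p := extTList mOf ws 0
    let ws' := p.1
    let c0 := p.2
    let slot : STerm F V → List (STerm F V) := fun mid =>
      (List.range m).map (fun q => if q = i - 1 then mid else .var (Sum.inr (c0 + q)))
    let k := ρ.conds.length
    ⟨(if j = 0 then
        Term.app (SSym.orig f) (ws' ++ slot botT)
      else
        Term.app (SSym.orig f)
          (ws' ++ slot (tupT ρ j (extT mOf (ρ.conds.getD (j - 1) (dummyCond ρ)).2 (c0 + m)).1))),
     (if j = k then
        guardT (barT mOf ρ.rhs)
      else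
        Term.app (SSym.orig f)
          (ws' ++ slot (tupT ρ (j + 1) (barT mOf (ρ.conds.getD j (dummyCond ρ)).1)))),
     []⟩

/-- The unconditional rule `ext(l) → ⟨r̄⟩` obtained by the SR transformation
from an unconditional rule `l → r`. -/
def uncondSRRule {F V : Type} (mOf : F → ℕ) (ρ : CRule F V) : CRule (SSym F V) (WVar V) :=
  ⟨(extT mOf ρ.lhs 0).1, guardT (barT mOf ρ.rhs), []⟩

/-- The auxiliary rule `⟨⟨x⟩⟩ → ⟨x⟩`. -/
def auxGuard {F V : Type} : CRule (SSym F V) (WVar V) :=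
  ⟨guardT (guardT (.var (Sum.inr 0))), guardT (.var (Sum.inr 0)), []⟩

/-- The auxiliary rule shifting `⟨·⟩` upward over the `i`-th argument of the
symbol `f` (and resetting the extra arguments of defined symbols):
`f̄(x1,…,⟨xi⟩,…,xn, z1,…,zm) → ⟨f̄(x1,…,xn, ⊥,…,⊥)⟩`. -/
def auxShift {F V : Type} (ar mOf : F → ℕ) (f : F) (i : ℕ) : CRule (SSym F V) (WVar V) :=
  ⟨Term.app (SSym.orig f)
     (((List.range (ar f)).map
         (fun q => if q = i then guardT (.var (Sum.inr q)) else .var (Sum.inr q))) ++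
      (List.range (mOf f)).map (fun q => .var (Sum.inr (ar f + q)))),
   guardT (Term.app (SSym.orig f)
     (((List.range (ar f)).map (fun q => Term.var (Sum.inr q))) ++
      List.replicate (mOf f) botT)),
   []⟩

/-- The SR transformation `SR(R)`: the unconditional TRS over `F̄` consisting of
the transformed rules of `R` together with the auxiliary rules `R_aux`. -/
def SRSys {F V : Type} [DecidableEq V] (R : CTRS F V) (ar mOf : F → ℕ)
    (idx : CRule F V → ℕ) : CTRS (SSym F V) (WVar V) :=
  { r | (∃ ρ ∈ R, ρ.conds = [] ∧ r = uncondSRRule mOf ρ) ∨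
        (∃ ρ ∈ R, ρ.conds ≠ [] ∧ ∃ j ≤ ρ.conds.length, r = condSRRule mOf idx ρ j) ∨
        r = auxGuard ∨
        (∃ (f : F) (i : ℕ), i < ar f ∧ r = auxShift ar mOf f i) }

/-- Well-formedness of the data `(ar, mOf, idx)` describing the signature `F`
(with arities `ar`), the number `mOf f` of conditional `f`-rules of `R`, and
the ranking `idx` of the conditional rules of each defined symbol by some
arbitrary but fixed order. -/
def GoodSetup {F V : Type} [DecidableEq V] (R : CTRS F V) (ar mOf : F → ℕ)
    (idx : CRule F V → ℕ) : Prop :=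
  (∀ ρ ∈ R, ρ.lhs.WF ar ∧ ρ.rhs.WF ar ∧ ∀ c ∈ ρ.conds, c.1.WF ar ∧ c.2.WF ar) ∧
  (∀ ρ ∈ R, ∃ (f : F) (ws : List (Term F V)), ρ.lhs = Term.app f ws) ∧
  (∀ ρ ∈ R, ρ.conds ≠ [] →
     ∀ (f : F) (ws : List (Term F V)), ρ.lhs = Term.app f ws →
       1 ≤ idx ρ ∧ idx ρ ≤ mOf f) ∧
  (∀ ρ₁, ρ₁ ∈ R → ∀ ρ₂, ρ₂ ∈ R → ρ₁.conds ≠ [] → ρ₂.conds ≠ [] →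
     ∀ (f : F) (ws₁ ws₂ : List (Term F V)),
       ρ₁.lhs = Term.app f ws₁ → ρ₂.lhs = Term.app f ws₂ →
       idx ρ₁ = idx ρ₂ → ρ₁ = ρ₂) ∧
  (∀ (f : F) (i : ℕ), 1 ≤ i → i ≤ mOf f →
     ∃ ρ ∈ R, ρ.conds ≠ [] ∧ (∃ ws : List (Term F V), ρ.lhs = Term.app f ws) ∧ idx ρ = i)
/-- The unraveled system `U(R)` with its rules considered over the extended
variable set `WVar V` (so that it rewrites the terms in the image of `Φ`). -/
def USysW {F V : Type} [DecidableEq V] (R : CTRS F V) : CTRS (UF F V) (WVar V) :=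
  { r | ∃ r' ∈ USys R, r = r'.mapV Sum.inl }

/-- Membership in the set `Φ(t)`: `PhiMem R ar mOf idx t u` states that
`u ∈ Φ(t)`, where `Φ` is the mapping (defined mutually with the auxiliary
mapping `Ψ`) from reachable terms of `T(F̄,V)` to sets of terms of
`T(U_R(F),V)`:
* `Φ(x) = {x}` for a variable `x`;
* `Φ(⟨t⟩) = Φ(t)`;
* for an original symbol `f` applied to arguments `ts`, `Φ` contains
  `f(t'1,…,t'n)` for all `t'p ∈ Φ(tp)` of the first `ar f` arguments (this is
  the clause for constructors and the clause `Ψ(f̄(t⃗,⊥,…,⊥))` for defined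
  symbols), and
* for each `i`-th extra argument of a defined symbol `f` that is a tuple
  `[⟨t'⟩, t'1,…,t'_{nj}]^ρ_j` (where `ρ` is the `i`-th conditional `f`-rule),
  `Φ` contains all terms `U^ρ_j(u', u⃗')` with `u' ∈ Φ(t')` and
  `u⃗' ∈ Φ(σ(X⃗j))`, where `σ` is a substitution with `σ(V⃗j) = t'1,…,t'_{nj}`
  and `σ(ext(w1),…,ext(wn))` equal to the main arguments of the node. -/
inductive PhiMem {F V : Type} [DecidableEq V] (R : CTRS F V) (ar mOf : F → ℕ)
    (idx : CRule F V → ℕ) : STerm F V → Term (UF F V) (WVar V) → Prop where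
  | var (x : WVar V) : PhiMem R ar mOf idx (.var x) (.var x)
  | guard {t : STerm F V} {u : Term (UF F V) (WVar V)} :
      PhiMem R ar mOf idx t u → PhiMem R ar mOf idx (guardT t) u
  | orig {f : F} {ts : List (STerm F V)} {us : List (Term (UF F V) (WVar V))} :
      us.length = (ts.take (ar f)).length →
      (∀ p ∈ List.zip (ts.take (ar f)) us, PhiMem R ar mOf idx p.1 p.2) →
      PhiMem R ar mOf idx (.app (.orig f) ts) (.app (Sum.inl f) us)
  | cond {f : F} {ts : List (STerm F V)} {ρ : CRule F V} {ws : List (Term F V)}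
      {j : ℕ} {tin : STerm F V} {vargs : List (STerm F V)}
      {σ : WVar V → STerm F V} {u : Term (UF F V) (WVar V)}
      {us : List (Term (UF F V) (WVar V))} :
      ρ ∈ R → ρ.conds ≠ [] → ρ.lhs = .app f ws →
      1 ≤ j → j ≤ ρ.conds.length →
      (ts.drop (ar f))[idx ρ - 1]? = some (.app (.tup ρ j) (guardT tin :: vargs)) →
      (Vlist ρ j).map (fun v => σ (Sum.inl v)) = vargs →
      (extTList mOf ws 0).1.map (Term.subst σ) = ts.take (ar f) →
      PhiMem R ar mOf idx tin u →
      us.length = (Xlist ρ j).length →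
      (∀ p ∈ List.zip (Xlist ρ j) us, PhiMem R ar mOf idx (σ (Sum.inl p.1)) p.2) →
      PhiMem R ar mOf idx (.app (.orig f) ts) (.app (Sum.inr (ρ, j)) (u :: us))

/-- The set `Φ(t)`. -/
def Phi {F V : Type} [DecidableEq V] (R : CTRS F V) (ar mOf : F → ℕ)
    (idx : CRule F V → ℕ) (t : STerm F V) : Set (Term (UF F V) (WVar V)) :=
  { u | PhiMem R ar mOf idx t u }

/-- `σ' ∈ Φ(σ)`, the extension of `Φ` to substitutions:
`Dom(σ') ⊆ Dom(σ)` and `xσ' ∈ Φ(xσ)` for every `x ∈ Dom(σ)`. -/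
def PhiSub {F V : Type} [DecidableEq V] (R : CTRS F V) (ar mOf : F → ℕ)
    (idx : CRule F V → ℕ) (σ : WVar V → STerm F V)
    (σ' : WVar V → Term (UF F V) (WVar V)) : Prop :=
  ∀ x : WVar V, PhiMem R ar mOf idx (σ x) (σ' x)

/-- The relation `s ⇝ t`: for each `t' ∈ Φ(t)` there exists `s' ∈ Φ(s)` with
`s' →*_{U(R)} t'`. -/
def Leadsto {F V : Type} [DecidableEq V] (R : CTRS F V) (ar mOf : F → ℕ)
    (idx : CRule F V → ℕ) (s t : STerm F V) : Prop :=
  ∀ u, PhiMem R ar mOf idx t u →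
    ∃ u', PhiMem R ar mOf idx s u' ∧ RedStar (USysW R) u' u

/-- A term of `T(F̄,V)` is reachable if it is a subterm of some term reachable
by `SR(R)` from `⟨s̄⟩` for some `s ∈ T(F,V)`. -/
def SRReachable {F V : Type} [DecidableEq V] (R : CTRS F V) (ar mOf : F → ℕ)
    (idx : CRule F V → ℕ) (t : STerm F V) : Prop :=
  ∃ (s : Term F V) (C : Ctx (SSym F V) (WVar V)),
    s.WF ar ∧ RedStar (SRSys R ar mOf idx) (guardT (barT mOf s)) (C.fill t)

/-- The restriction `σ|_X` of a substitution to the variables of a term `t`. -/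
def restrictTo {F V : Type} [DecidableEq V] (σ : WVar V → STerm F V) (t : STerm F V) :
    WVar V → STerm F V :=
  fun x => if 0 < t.count x then σ x else .var x

/-!
Terms reachable in `SR(R)` are well-formed over `F̄`, because right-hand sides of `SR(R)` are
well-formed and, by determinism, introduce no new variables. Hence `t̂` is a well-formed term with
`Var(t̂) ⊆ Var(t)`. In `(t̂)‾` every extra argument is `⊥`, so at a function symbol the only clause
of `Φ` that applies is the one descending into the main arguments; therefore `Φ` is
singleton-valued on `(t̂)‾σ` as soon as it is on the terms `xσ` with `x ∈ Var(t)`.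
-/

theorem exists_mem_left_of_forall₂ {α β : Type*} {r : α → β → Prop} {l₁ : List α} {l₂ : List β}
    (h : List.Forall₂ r l₁ l₂) {b : β} (hb : b ∈ l₂) : ∃ a ∈ l₁, r a b := by
  induction h with
  | nil => simp at hb
  | cons hab _ ih =>
    rcases List.mem_cons.1 hb with rfl | hb
    · exact ⟨_, List.mem_cons_self, hab⟩
    · obtain ⟨a, ha, hr⟩ := ih hb
      exact ⟨a, List.mem_cons_of_mem _ ha, hr⟩

theorem mapM_eq_some_iff_forall₂ {α β : Type*} {g : α → Option β} {l₁ : List α} {l₂ : List β} :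
    l₁.mapM g = some l₂ ↔ List.Forall₂ (fun a b => g a = some b) l₁ l₂ := by
  induction l₁ generalizing l₂ with
  | nil => simp [eq_comm]
  | cons a l₁ ih =>
    simp only [List.mapM_cons, Option.bind_eq_bind, Option.pure_def, Option.bind_eq_some_iff,
      Option.some.injEq, List.forall₂_cons_left_iff, ih]
    grind

theorem forall₂_map_left_iff_eq_map {α β γ : Type*} {r : β → γ → Prop} {g : α → β} {h : α → γ}
    {l : List α} (hr : ∀ a ∈ l, ∀ c, r (g a) c ↔ c = h a) {l' : List γ} :
    List.Forall₂ r (l.map g) l' ↔ l' = l.map h := by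
  induction l generalizing l' with
  | nil => simp
  | cons a l ih =>
    rw [List.forall_mem_cons] at hr
    simp [List.forall₂_cons_left_iff, hr.1, ih hr.2]

/-! ### Terms -/

namespace Term

variable {F V W : Type} {ar : F → ℕ}

@[elab_as_elim, induction_eliminator]
theorem induction {motive : Term F V → Prop} (var : ∀ x, motive (.var x))
    (app : ∀ f ts, (∀ t ∈ ts, motive t) → motive (.app f ts)) : ∀ t, motive t
  | .var x => var x
  | .app f ts => app f ts fun t _ => induction var app t

@[simp]
theorem subst_var (σ : V → Term F W) (x : V) : (Term.var x).subst σ = σ x := by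
  rw [subst]

@[simp]
theorem subst_app (σ : V → Term F W) (f : F) (ts : List (Term F V)) :
    (Term.app f ts).subst σ = .app f (ts.map (Term.subst σ)) := by
  simp [subst]

@[simp]
theorem mem_varList_var {x y : V} : x ∈ (Term.var y : Term F V).varList ↔ x = y := by
  simp [varList]

@[simp]
theorem mem_varList_app {x : V} {f : F} {ts : List (Term F V)} :
    x ∈ (Term.app f ts).varList ↔ ∃ t ∈ ts, x ∈ t.varList := by
  simp [varList]

theorem count_pos_iff [DecidableEq V] {x : V} {t : Term F V} :
    0 < t.count x ↔ x ∈ t.varList := by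
  induction t with
  | var y => simp [count, varList, Nat.pos_iff_ne_zero, eq_comm]
  | app f ts ih =>
    simp only [count, mem_varList_app, List.sum_pos_iff_exists_pos_nat, List.map_subtype,
      List.unattach_attach, List.mem_map, exists_exists_and_eq_and]
    exact exists_congr fun t => and_congr_right (ih t)

@[simp]
theorem wf_var (x : V) : (Term.var x : Term F V).WF ar := .var x

@[simp]
theorem wf_app_iff {f : F} {ts : List (Term F V)} :
    (Term.app f ts).WF ar ↔ ts.length = ar f ∧ ∀ t ∈ ts, t.WF ar :=
  ⟨fun | .app _ _ hlen hts => ⟨hlen, hts⟩, fun h => .app f ts h.1 h.2⟩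

theorem wf_subst_iff {σ : V → Term F W} {t : Term F V} :
    (t.subst σ).WF ar ↔ t.WF ar ∧ ∀ x ∈ t.varList, (σ x).WF ar := by
  induction t with
  | var y => simp
  | app f ts ih =>
    simp only [subst_app, wf_app_iff, List.length_map, List.forall_mem_map, mem_varList_app]
    grind

end Term

theorem Ctx.wf_of_wf_fill {F V : Type} {ar : F → ℕ} {t : Term F V} :
    ∀ {C : Ctx F V}, (C.fill t).WF ar → t.WF ar
  | .hole, h => h
  | .app _ _ _ _, h => wf_of_wf_fill ((Term.wf_app_iff.1 h).2 _ List.mem_append_cons_self)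

/-! ### Rewriting preserves well-formedness -/

/-- The conditions on a rule under which rewriting with it preserves well-formedness: the
right-hand side is well-formed and has no variables that are missing in the left-hand side. -/
structure CRule.PreservesWF {F V : Type} (ar : F → ℕ) (r : CRule F V) : Prop where
  rhs_wf : r.rhs.WF ar
  varList_subset : r.rhs.varList ⊆ r.lhs.varList

section Rewriting

variable {F V : Type} {ar : F → ℕ} {S : CTRS F V} {s t : Term F V}

theorem RootStep.wf {prev : Term F V → Term F V → Prop} (hS : ∀ r ∈ S, r.PreservesWF ar)
    (h : RootStep S prev s t) (hs : s.WF ar) : t.WF ar := by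
  obtain ⟨r, hr, σ, rfl, rfl, -⟩ := h
  have hσ := (Term.wf_subst_iff.1 hs).2
  exact Term.wf_subst_iff.2 ⟨(hS r hr).rhs_wf, fun x hx => hσ x ((hS r hr).varList_subset hx)⟩

theorem CtxStep.wf {root : Term F V → Term F V → Prop}
    (hroot : ∀ {s t}, root s t → s.WF ar → t.WF ar) (h : CtxStep root s t) (hs : s.WF ar) :
    t.WF ar := by
  induction h with
  | root h => exact hroot h hs
  | congr _ ih =>
    simp only [Term.wf_app_iff, List.length_append, List.length_cons, List.forall_mem_append,
      List.forall_mem_cons] at hs ⊢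
    exact ⟨hs.1, hs.2.1, ih hs.2.2.1, hs.2.2.2⟩

theorem RedStar.wf (hS : ∀ r ∈ S, r.PreservesWF ar) (h : RedStar S s t) (hs : s.WF ar) :
    t.WF ar := by
  induction h with
  | refl => exact hs
  | tail _ h ih =>
    obtain ⟨_ | n, h⟩ := h
    · exact h.elim
    · exact CtxStep.wf (RootStep.wf hS) h ih

end Rewriting

/-! ### Variables of deterministic rules -/

section Variables

variable {F V : Type} [DecidableEq V] {ρ : CRule F V} {x : V} {i j : ℕ}

theorem seqCount_pos_iff {ts : List (Term F V)} :
    0 < seqCount x ts ↔ ∃ t ∈ ts, x ∈ t.varList := by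
  simp [seqCount, List.sum_pos_iff_exists_pos_nat, Term.count_pos_iff]

theorem mem_Vlist : x ∈ Vlist ρ j ↔ ∃ c ∈ ρ.conds.take (j - 1), x ∈ c.2.varList := by
  simp only [Vlist, List.mem_dedup, List.mem_flatMap, List.mem_map, exists_exists_and_eq_and]

theorem mem_Xlist : x ∈ Xlist ρ j ↔ x ∈ ρ.lhs.varList ∨ x ∈ Vlist ρ j := by
  simp [Xlist, Vlist]

theorem mem_Vlist_add_two (hj : j < ρ.conds.length) :
    x ∈ Vlist ρ (j + 2) ↔ x ∈ Vlist ρ (j + 1) ∨ x ∈ ρ.conds[j].2.varList := by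
  simp only [mem_Vlist, Nat.add_sub_cancel, Nat.add_succ_sub_one,
    List.take_succ_eq_append_getElem hj, List.mem_append, List.mem_singleton, or_and_right,
    exists_or, exists_eq_left]

theorem Xlist_subset (h : i ≤ j) : Xlist ρ i ⊆ Xlist ρ j := by
  intro x
  simp only [mem_Xlist, mem_Vlist]
  exact Or.imp_right fun ⟨c, hc, hx⟩ =>
    ⟨c, List.take_subset_take_left _ (Nat.sub_le_sub_right h 1) hc, hx⟩

theorem seqCount_pos_iff_mem_Xlist :
    0 < seqCount x (ρ.lhs :: (ρ.conds.take j).map Prod.snd) ↔ x ∈ Xlist ρ (j + 1) := by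
  simp only [seqCount_pos_iff, List.exists_mem_cons_iff, List.mem_map, exists_exists_and_eq_and,
    mem_Xlist, mem_Vlist, Nat.add_sub_cancel]

theorem CRule.Det.varList_fst_subset (hρ : ρ.Det) (hj : j < ρ.conds.length) :
    ρ.conds[j].1.varList ⊆ Xlist ρ (j + 1) := fun x hx =>
  seqCount_pos_iff_mem_Xlist.1 (hρ j hj x (Term.count_pos_iff.2 hx))

theorem CRule.Det.varList_rhs_subset (hρ : ρ.Det) (h3 : ρ.Type3) :
    ρ.rhs.varList ⊆ Xlist ρ (ρ.conds.length + 1) := by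
  intro x hx
  obtain ⟨t, ht, hxt⟩ := seqCount_pos_iff.1 (h3 x (Term.count_pos_iff.2 hx))
  simp only [List.mem_cons, List.mem_flatMap, List.not_mem_nil, or_false] at ht
  rcases ht with rfl | ⟨c, hc, rfl | rfl⟩
  · exact mem_Xlist.2 (.inl hxt)
  · obtain ⟨j, hj, rfl⟩ := List.mem_iff_getElem.1 hc
    exact Xlist_subset (by omega) (hρ.varList_fst_subset hj hxt)
  · exact mem_Xlist.2 (.inr (mem_Vlist.2 ⟨c, by simpa using hc, hxt⟩))

end Variables

/-! ### Well-formed terms over the extended signature -/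

/-- The arities of the extended signature `F̄`. -/
def srArity {F V : Type} [DecidableEq V] (ar mOf : F → ℕ) : SSym F V → ℕ
  | .orig f => ar f + mOf f
  | .bot => 0
  | .guard => 1
  | .tup ρ j => 1 + (Vlist ρ j).length

section ExtendedTerms

variable {F V : Type} {ar mOf : F → ℕ}

@[simp]
theorem not_mem_varList_botT {x : WVar V} : x ∉ (botT : STerm F V).varList := by
  simp [botT]

@[simp]
theorem mem_varList_guardT {x : WVar V} {s : STerm F V} :
    x ∈ (guardT s).varList ↔ x ∈ s.varList := by
  simp [guardT]

theorem barT_app (f : F) (ts : List (Term F V)) :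
    barT mOf (.app f ts) =
      .app (.orig f) (ts.map (barT mOf) ++ List.replicate (mOf f) botT) := by
  simp [barT]

theorem mem_varList_barT {x : WVar V} {t : Term F V} :
    x ∈ (barT mOf t).varList ↔ ∃ y ∈ t.varList, Sum.inl y = x := by
  induction t with
  | var y => simp [barT, eq_comm]
  | app f ts ih =>
    simp only [barT_app, Term.mem_varList_app, List.mem_append, List.mem_map,
      List.mem_replicate]
    grind [not_mem_varList_botT]

theorem forall₂_extTList : ∀ (ts : List (Term F V)) (c : ℕ),
    List.Forall₂ (fun t s => ∃ c', (extT mOf t c').1 = s) ts (extTList mOf ts c).1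
  | [], _ => .nil
  | _ :: ts, _ => .cons ⟨_, rfl⟩ (forall₂_extTList ts _)

theorem length_extTList (ts : List (Term F V)) (c : ℕ) :
    (extTList mOf ts c).1.length = ts.length :=
  (forall₂_extTList ts c).length_eq.symm

theorem exists_extT_eq_of_mem_extTList {ts : List (Term F V)} {c : ℕ} {s : STerm F V}
    (hs : s ∈ (extTList mOf ts c).1) : ∃ t ∈ ts, ∃ c', (extT mOf t c').1 = s :=
  exists_mem_left_of_forall₂ (forall₂_extTList ts c) hs

theorem exists_extT_mem_extTList {ts : List (Term F V)} {t : Term F V} (ht : t ∈ ts) (c : ℕ) :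
    ∃ c', (extT mOf t c').1 ∈ (extTList mOf ts c).1 := by
  obtain ⟨_, hs, c', rfl⟩ := exists_mem_left_of_forall₂ (forall₂_extTList ts c).flip ht
  exact ⟨c', hs⟩

theorem inl_mem_varList_extT {t : Term F V} {x : V} (hx : x ∈ t.varList) (c : ℕ) :
    Sum.inl x ∈ (extT mOf t c).1.varList := by
  induction t generalizing c with
  | var y => simpa [extT] using hx
  | app f ts ih =>
    obtain ⟨t, ht, hxt⟩ := Term.mem_varList_app.1 hx
    obtain ⟨c', hmem⟩ := exists_extT_mem_extTList (mOf := mOf) ht c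
    rw [extT, Term.mem_varList_app]
    exact ⟨_, List.mem_append_left _ hmem, ih t ht hxt c'⟩

variable [DecidableEq V]

@[simp]
theorem mem_varList_tupT {x : WVar V} {ρ : CRule F V} {j : ℕ} {s : STerm F V} :
    x ∈ (tupT ρ j s).varList ↔ x ∈ s.varList ∨ ∃ v ∈ Vlist ρ j, Sum.inl v = x := by
  simp [tupT, eq_comm]

@[simp]
theorem wf_botT : (botT : STerm F V).WF (srArity ar mOf) := by
  simp [botT, srArity]

@[simp]
theorem wf_guardT_iff {s : STerm F V} :
    (guardT s).WF (srArity ar mOf) ↔ s.WF (srArity ar mOf) := by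
  simp [guardT, srArity]

theorem wf_tupT {s : STerm F V} (hs : s.WF (srArity ar mOf)) (ρ : CRule F V) (j : ℕ) :
    (tupT ρ j s).WF (srArity ar mOf) := by
  simp [tupT, srArity, hs, add_comm]

theorem wf_barT {t : Term F V} (ht : t.WF ar) : (barT mOf t).WF (srArity ar mOf) := by
  induction t with
  | var x => simp [barT]
  | app f ts ih =>
    rw [Term.wf_app_iff] at ht
    rw [barT_app, Term.wf_app_iff]
    refine ⟨by simp [srArity, ht.1], fun s hs => ?_⟩
    rcases List.mem_append.1 hs with hs | hs
    · obtain ⟨t, hmem, rfl⟩ := List.mem_map.1 hs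
      exact ih t hmem (ht.2 t hmem)
    · exact List.eq_of_mem_replicate hs ▸ wf_botT

theorem wf_extT {t : Term F V} (ht : t.WF ar) (c : ℕ) :
    (extT mOf t c).1.WF (srArity ar mOf) := by
  induction t generalizing c with
  | var x => simp [extT]
  | app f ts ih =>
    rw [Term.wf_app_iff] at ht
    rw [extT, Term.wf_app_iff]
    refine ⟨by simp [srArity, length_extTList, ht.1], fun s hs => ?_⟩
    rcases List.mem_append.1 hs with hs | hs
    · obtain ⟨t, hmem, c', rfl⟩ := exists_extT_eq_of_mem_extTList hs
      exact ih t hmem (ht.2 t hmem) c'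
    · obtain ⟨k, -, rfl⟩ := List.mem_map.1 hs
      exact .var _

end ExtendedTerms

/-! ### The rules of `SR(R)` -/

/-- The term `f̄(ext(w₁), …, ext(wₙ), z₁, …, s, …, zₘ)` whose `i`-th extra argument, counted from
`1`, is `s` and whose other extra arguments are fresh variables. All rules of `SR(R)` that come
from a conditional rule with left-hand side `f(w₁, …, wₙ)` are built from such terms. -/
def condNode {F V : Type} (mOf : F → ℕ) (f : F) (ws : List (Term F V)) (i : ℕ)
    (s : STerm F V) : STerm F V :=
  .app (.orig f) ((extTList mOf ws 0).1 ++ (List.range (mOf f)).map fun q =>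
    if q = i - 1 then s else .var (Sum.inr ((extTList mOf ws 0).2 + q)))

section Rules

variable {F V : Type} {ar mOf : F → ℕ} {f : F} {ws : List (Term F V)} {i j : ℕ}

theorem inl_mem_varList_condNode {w : Term F V} (hw : w ∈ ws) {x : V} (hx : x ∈ w.varList)
    (i : ℕ) (s : STerm F V) : Sum.inl x ∈ (condNode mOf f ws i s).varList := by
  obtain ⟨c, hmem⟩ := exists_extT_mem_extTList (mOf := mOf) hw 0
  exact Term.mem_varList_app.2 ⟨_, List.mem_append_left _ hmem, inl_mem_varList_extT hx c⟩

theorem varList_subset_varList_condNode (hi : 1 ≤ i) (him : i ≤ mOf f) (s : STerm F V) :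
    s.varList ⊆ (condNode mOf f ws i s).varList := fun x hx =>
  Term.mem_varList_app.2 ⟨s, List.mem_append_right _ (List.mem_map.2
    ⟨i - 1, List.mem_range.2 (by omega), if_pos rfl⟩), hx⟩

theorem varList_condNode_subset {s s' : STerm F V} {l : List (WVar V)}
    (hs : s.varList ⊆ l) (hs' : (condNode mOf f ws i s').varList ⊆ l) :
    (condNode mOf f ws i s).varList ⊆ l := by
  intro x hx
  obtain ⟨a, ha, hxa⟩ := Term.mem_varList_app.1 hx
  rcases List.mem_append.1 ha with ha | ha
  · exact hs' (Term.mem_varList_app.2 ⟨a, List.mem_append_left _ ha, hxa⟩)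
  · obtain ⟨q, hq, rfl⟩ := List.mem_map.1 ha
    split_ifs at hxa with hqi
    · exact hs hxa
    · exact hs' (Term.mem_varList_app.2
        ⟨_, List.mem_append_right _ (List.mem_map.2 ⟨q, hq, if_neg hqi⟩), hxa⟩)

variable [DecidableEq V]

theorem wf_condNode {s : STerm F V} (h : (Term.app f ws).WF ar) (hs : s.WF (srArity ar mOf))
    (i : ℕ) : (condNode mOf f ws i s).WF (srArity ar mOf) := by
  rw [Term.wf_app_iff] at h
  refine Term.wf_app_iff.2 ⟨by simp [srArity, length_extTList, h.1], fun a ha => ?_⟩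
  rcases List.mem_append.1 ha with ha | ha
  · obtain ⟨w, hw, c, rfl⟩ := exists_extT_eq_of_mem_extTList ha
    exact wf_extT (h.2 w hw) c
  · obtain ⟨q, -, rfl⟩ := List.mem_map.1 ha
    split_ifs
    · exact hs
    · exact .var _

variable {ρ : CRule F V} {idx : CRule F V → ℕ}

theorem condSRRule_lhs_eq_condNode (hl : ρ.lhs = .app f ws) (j : ℕ) :
    ∃ s, (condSRRule mOf idx ρ j).lhs = condNode mOf f ws (idx ρ) s := by
  simp only [condSRRule, hl]
  split_ifs
  exacts [⟨_, rfl⟩, ⟨_, rfl⟩]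

theorem condSRRule_lhs_succ (hl : ρ.lhs = .app f ws) (hj : j < ρ.conds.length) :
    (condSRRule mOf idx ρ (j + 1)).lhs = condNode mOf f ws (idx ρ)
      (tupT ρ (j + 1) (extT mOf ρ.conds[j].2 ((extTList mOf ws 0).2 + mOf f)).1) := by
  simp [condSRRule, hl, condNode, hj]

theorem condSRRule_rhs_of_lt (hl : ρ.lhs = .app f ws) (hj : j < ρ.conds.length) :
    (condSRRule mOf idx ρ j).rhs = condNode mOf f ws (idx ρ)
      (tupT ρ (j + 1) (barT mOf ρ.conds[j].1)) := by
  simp [condSRRule, hl, condNode, hj, hj.ne]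

theorem condSRRule_rhs_length (hl : ρ.lhs = .app f ws) :
    (condSRRule mOf idx ρ ρ.conds.length).rhs = guardT (barT mOf ρ.rhs) := by
  simp [condSRRule, hl]

theorem inl_mem_varList_condSRRule_lhs (hl : ρ.lhs = .app f ws) (hi : 1 ≤ idx ρ)
    (him : idx ρ ≤ mOf f) (hj : j ≤ ρ.conds.length) {x : V} (hx : x ∈ Xlist ρ (j + 1)) :
    Sum.inl x ∈ (condSRRule mOf idx ρ j).lhs.varList := by
  rcases mem_Xlist.1 hx with hx | hx
  · rw [hl, Term.mem_varList_app] at hx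
    obtain ⟨w, hw, hx⟩ := hx
    obtain ⟨s, hs⟩ := condSRRule_lhs_eq_condNode (mOf := mOf) (idx := idx) hl j
    exact hs ▸ inl_mem_varList_condNode hw hx _ s
  · obtain _ | j := j
    · simp [mem_Vlist] at hx
    · rw [condSRRule_lhs_succ hl hj]
      apply varList_subset_varList_condNode hi him
      rw [mem_varList_tupT]
      rcases (mem_Vlist_add_two hj).1 hx with hx | hx
      · exact .inr ⟨x, hx, rfl⟩
      · exact .inl (inl_mem_varList_extT hx _)

theorem condSRRule_preservesWF (hl : ρ.lhs = .app f ws) (hi : 1 ≤ idx ρ) (him : idx ρ ≤ mOf f)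
    (hlhs : ρ.lhs.WF ar) (hrhs : ρ.rhs.WF ar) (hconds : ∀ c ∈ ρ.conds, c.1.WF ar)
    (hdet : ρ.Det) (h3 : ρ.Type3) (hj : j ≤ ρ.conds.length) :
    (condSRRule mOf idx ρ j).PreservesWF (srArity ar mOf) := by
  have hlhs_vars {x : V} : x ∈ Xlist ρ (j + 1) →
      Sum.inl x ∈ (condSRRule mOf idx ρ j).lhs.varList :=
    inl_mem_varList_condSRRule_lhs hl hi him hj
  obtain rfl | hlt := hj.eq_or_lt
  · constructor <;> rw [condSRRule_rhs_length hl]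
    · exact wf_guardT_iff.2 (wf_barT hrhs)
    · intro x hx
      obtain ⟨y, hy, rfl⟩ := mem_varList_barT.1 (mem_varList_guardT.1 hx)
      exact hlhs_vars (hdet.varList_rhs_subset h3 hy)
  · constructor <;> rw [condSRRule_rhs_of_lt hl hlt]
    · exact wf_condNode (hl ▸ hlhs) (wf_tupT (wf_barT (hconds _ (List.getElem_mem hlt))) ρ _) _
    · obtain ⟨s, hs⟩ := condSRRule_lhs_eq_condNode (mOf := mOf) (idx := idx) hl j
      refine varList_condNode_subset (s' := s) (fun x hx => ?_) (hs ▸ List.Subset.refl _)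
      rcases mem_varList_tupT.1 hx with hx | ⟨v, hv, rfl⟩
      · obtain ⟨y, hy, rfl⟩ := mem_varList_barT.1 hx
        exact hlhs_vars (hdet.varList_fst_subset hlt hy)
      · exact hlhs_vars (mem_Xlist.2 (.inr hv))

theorem uncondSRRule_preservesWF (hrhs : ρ.rhs.WF ar) (hdet : ρ.Det) (h3 : ρ.Type3)
    (hρ : ρ.conds = []) : (uncondSRRule mOf ρ).PreservesWF (srArity ar mOf) where
  rhs_wf := wf_guardT_iff.2 (wf_barT hrhs)
  varList_subset x hx := by
    obtain ⟨y, hy, rfl⟩ := mem_varList_barT.1 (mem_varList_guardT.1 hx)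
    have hy : y ∈ Xlist ρ (ρ.conds.length + 1) := hdet.varList_rhs_subset h3 hy
    exact inl_mem_varList_extT (by simpa [mem_Xlist, mem_Vlist, hρ] using hy) 0

theorem auxGuard_preservesWF :
    (auxGuard : CRule (SSym F V) (WVar V)).PreservesWF (srArity ar mOf) where
  rhs_wf := by simp [auxGuard]
  varList_subset x := by simp [auxGuard]

theorem auxShift_preservesWF (f : F) (i : ℕ) :
    (auxShift ar mOf f i : CRule (SSym F V) (WVar V)).PreservesWF (srArity ar mOf) where
  rhs_wf := by
    simp only [auxShift, wf_guardT_iff, Term.wf_app_iff, List.forall_mem_append,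
      List.forall_mem_map]
    refine ⟨by simp [srArity], fun q _ => .var _, fun s hs => ?_⟩
    exact List.eq_of_mem_replicate hs ▸ wf_botT
  varList_subset x hx := by
    simp only [auxShift, mem_varList_guardT, Term.mem_varList_app, List.mem_append] at hx ⊢
    obtain ⟨s, hs | hs, hxs⟩ := hx
    · obtain ⟨q, hq, rfl⟩ := List.mem_map.1 hs
      refine ⟨_, .inl (List.mem_map.2 ⟨q, hq, rfl⟩), ?_⟩
      split_ifs
      · exact mem_varList_guardT.2 hxs
      · exact hxs
    · exact (not_mem_varList_botT (List.eq_of_mem_replicate hs ▸ hxs)).elim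

variable {R : CTRS F V}

theorem preservesWF_of_mem_SRSys (hS : GoodSetup R ar mOf idx) (hD : IsDCTRS R)
    {r : CRule (SSym F V) (WVar V)} (hr : r ∈ SRSys R ar mOf idx) :
    r.PreservesWF (srArity ar mOf) := by
  obtain ⟨hwf, happ, hidx, -⟩ := hS
  rcases hr with ⟨ρ, hρ, hc, rfl⟩ | ⟨ρ, hρ, hc, j, hj, rfl⟩ | rfl | ⟨f, i, -, rfl⟩
  · obtain ⟨-, hrhs, -⟩ := hwf ρ hρ
    exact uncondSRRule_preservesWF hrhs (hD ρ hρ).1 (hD ρ hρ).2.1 hc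
  · obtain ⟨hlhs, hrhs, hconds⟩ := hwf ρ hρ
    obtain ⟨f, ws, hl⟩ := happ ρ hρ
    obtain ⟨hi, him⟩ := hidx ρ hρ hc f ws hl
    exact condSRRule_preservesWF hl hi him hlhs hrhs (fun c hc => (hconds c hc).1)
      (hD ρ hρ).1 (hD ρ hρ).2.1 hj
  · exact auxGuard_preservesWF
  · exact auxShift_preservesWF f i

theorem SRReachable.wf (hS : GoodSetup R ar mOf idx) (hD : IsDCTRS R) {t : STerm F V}
    (ht : SRReachable R ar mOf idx t) : t.WF (srArity ar mOf) := by
  obtain ⟨s, C, hs, hred⟩ := ht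
  have hstart : (guardT (barT mOf s)).WF (srArity ar mOf) := wf_guardT_iff.2 (wf_barT hs)
  exact Ctx.wf_of_wf_fill (hred.wf (fun _ => preservesWF_of_mem_SRSys hS hD) hstart)

end Rules

/-! ### The backtranslation -/

section Backtranslation

variable {F V : Type} {ar : F → ℕ} {t : STerm F V} {u : Term F V}

theorem hatT_orig_eq_some_iff {f : F} {ts : List (STerm F V)} :
    hatT ar (.app (.orig f) ts) = some u ↔
      ∃ us, List.Forall₂ (fun t u => hatT ar t = some u) (ts.take (ar f)) us ∧
        Term.app f us = u := by
  simp [hatT, mapM_eq_some_iff_forall₂]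

@[elab_as_elim]
theorem hatT_induction {motive : STerm F V → Term F V → Prop}
    (var : ∀ x, motive (.var (Sum.inl x)) (.var x))
    (guard : ∀ t u, motive t u → motive (guardT t) u)
    (orig : ∀ f ts us, List.Forall₂ motive (ts.take (ar f)) us →
      motive (.app (.orig f) ts) (.app f us))
    (h : hatT ar t = some u) : motive t u := by
  induction t using Term.induction generalizing u with
  | var x =>
    obtain x | n := x
    · obtain rfl : Term.var x = u := by simpa [hatT] using h
      exact var x
    · simp [hatT] at h
  | app g ts ih =>
    match g, ts with
    | .orig f, ts =>
      obtain ⟨us, hus, rfl⟩ := hatT_orig_eq_some_iff.1 h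
      have hmotive : ∀ t ∈ ts.take (ar f), ∀ u, hatT ar t = some u → motive t u :=
        fun t ht u => ih t (List.mem_of_mem_take ht)
      exact orig f ts us
        (((List.forall₂_and_left _ _).2 ⟨hmotive, hus⟩).imp fun t u htu => htu.1 u htu.2)
    | .guard, [t] => exact guard t u (ih t (by simp) (by simpa [hatT] using h))
    | .guard, [] | .guard, _ :: _ :: _ | .bot, _ | .tup _ _, _ => simp [hatT] at h

theorem wf_of_hatT_eq_some [DecidableEq V] {mOf : F → ℕ} (h : hatT ar t = some u)
    (ht : t.WF (srArity ar mOf)) : u.WF ar := by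
  revert ht
  refine hatT_induction (fun x _ => .var x) (fun t u ih ht => ih (wf_guardT_iff.1 ht))
    (fun f ts us ih ht => ?_) h
  rw [Term.wf_app_iff] at ht ⊢
  refine ⟨by simp [← ih.length_eq, ht.1, srArity], fun u hu => ?_⟩
  obtain ⟨t, htmem, htu⟩ := exists_mem_left_of_forall₂ ih hu
  exact htu (ht.2 t (List.mem_of_mem_take htmem))

theorem inl_mem_varList_of_hatT_eq_some (h : hatT ar t = some u) {x : V} (hx : x ∈ u.varList) :
    Sum.inl x ∈ t.varList := by
  revert hx
  refine hatT_induction (fun y hy => ?_) (fun t u ih hx => mem_varList_guardT.2 (ih hx))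
    (fun f ts us ih hx => ?_) h
  · simpa using hy
  · obtain ⟨u, hu, hxu⟩ := Term.mem_varList_app.1 hx
    obtain ⟨t, ht, htu⟩ := exists_mem_left_of_forall₂ ih hu
    exact Term.mem_varList_app.2 ⟨t, List.mem_of_mem_take ht, htu hxu⟩

end Backtranslation

/-! ### The mapping `Φ` -/

section Phi

variable {F V : Type} [DecidableEq V] {R : CTRS F V} {ar mOf : F → ℕ} {idx : CRule F V → ℕ}

theorem phiMem_orig_replicate_botT_iff {f : F} {ts : List (STerm F V)} (hts : ts.length = ar f)
    (m : ℕ) {w : Term (UF F V) (WVar V)} :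
    PhiMem R ar mOf idx (.app (.orig f) (ts ++ List.replicate m botT)) w ↔
      ∃ us, List.Forall₂ (PhiMem R ar mOf idx) ts us ∧ w = .app (Sum.inl f) us := by
  have htake : (ts ++ List.replicate m botT).take (ar f) = ts := List.take_left' hts
  constructor
  · intro h
    generalize hs : Term.app (SSym.orig f) (ts ++ List.replicate m botT) = s at h
    cases h with
    | var => simp at hs
    | guard => simp [guardT] at hs
    | orig hlen hzip =>
      obtain ⟨rfl, rfl⟩ : _ ∧ _ := by simpa using hs
      rw [htake] at hlen hzip
      exact ⟨_, List.forall₂_iff_zip.2 ⟨hlen.symm, hzip _⟩, rfl⟩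
    | cond _ _ _ _ _ hget =>
      obtain ⟨rfl, rfl⟩ : _ ∧ _ := by simpa using hs
      rw [List.drop_left' hts] at hget
      simpa [botT] using List.eq_of_mem_replicate (List.mem_of_getElem? hget)
  · rintro ⟨us, hus, rfl⟩
    refine .orig ?_ ?_ <;> rw [htake]
    · exact hus.length_eq.symm
    · exact fun p hp => List.forall₂_zip hus hp

theorem phi_barT_subst {σ : WVar V → STerm F V} {σ' : WVar V → Term (UF F V) (WVar V)}
    {u : Term F V} (hu : u.WF ar)
    (h : ∀ x ∈ u.varList, Phi R ar mOf idx (σ (Sum.inl x)) = {σ' (Sum.inl x)}) :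
    Phi R ar mOf idx ((barT mOf u).subst σ) = {(liftUV u).subst σ'} := by
  induction u with
  | var x => simpa [barT, liftUV, Term.rename, Term.mapF] using h x (by simp)
  | app f ts ih =>
    rw [Term.wf_app_iff] at hu
    have hargs : ∀ t ∈ ts, ∀ w,
        PhiMem R ar mOf idx ((barT mOf t).subst σ) w ↔ w = (liftUV t).subst σ' :=
      fun t ht => Set.ext_iff.1 <|
        ih t ht (hu.2 t ht) fun x hx => h x (Term.mem_varList_app.2 ⟨t, ht, hx⟩)
    have hbar : (barT mOf (.app f ts)).subst σ = .app (.orig f)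
        (ts.map (fun t => (barT mOf t).subst σ) ++ List.replicate (mOf f) botT) := by
      simp [barT_app, botT, Function.comp_def]
    have hlift : (liftUV (.app f ts)).subst σ' = .app (Sum.inl f)
        (ts.map fun t => (liftUV t).subst σ') := by
      simp [liftUV, Term.rename, Term.mapF, Function.comp_def]
    ext w
    rw [hbar, hlift]
    exact (phiMem_orig_replicate_botT_iff (by simpa using hu.1) _).trans
      (by simp [forall₂_map_left_iff_eq_map hargs])

theorem phi_eq_singleton_of_phiSub_unique {τ : WVar V → STerm F V}
    {τ' : WVar V → Term (UF F V) (WVar V)} (hτ : PhiSub R ar mOf idx τ τ')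
    (huniq : ∀ τ'', PhiSub R ar mOf idx τ τ'' → τ'' = τ') (x : WVar V) :
    Phi R ar mOf idx (τ x) = {τ' x} := by
  refine Set.eq_singleton_iff_unique_mem.2 ⟨hτ x, fun w hw => ?_⟩
  have hupdate : PhiSub R ar mOf idx τ (Function.update τ' x w) := fun y => by
    obtain rfl | hy := eq_or_ne y x
    · rwa [Function.update_self]
    · rw [Function.update_of_ne hy]
      exact hτ y
  rw [← huniq _ hupdate, Function.update_self]

theorem restrictTo_of_mem_varList (σ : WVar V → STerm F V) {t : STerm F V} {x : WVar V}
    (hx : x ∈ t.varList) : restrictTo σ t x = σ x :=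
  if_pos (Term.count_pos_iff.2 hx)

end Phi

theorem Phi_hat_bar_subst_general {F V : Type} [DecidableEq V]
    (R : CTRS F V) (ar mOf : F → ℕ) (idx : CRule F V → ℕ)
    (t : STerm F V) (ht : t.WF (srArity ar mOf))
    (σ : WVar V → STerm F V)
    (u : Term F V) (hu : hatT ar t = some u)
    (σ' : WVar V → Term (UF F V) (WVar V))
    (h1 : PhiSub R ar mOf idx (restrictTo σ t) σ')
    (h2 : ∀ σ'', PhiSub R ar mOf idx (restrictTo σ t) σ'' → σ'' = σ') :
    Phi R ar mOf idx ((barT mOf u).subst σ) = {(liftUV u).subst σ'} := by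
  refine phi_barT_subst (wf_of_hatT_eq_some hu ht) fun x hx => ?_
  rw [← restrictTo_of_mem_varList σ (inl_mem_varList_of_hatT_eq_some hu hx)]
  exact phi_eq_singleton_of_phiSub_unique h1 h2 _

/-- **Lemma (properties of `Φ`, claim (d)).**
Let `R` be a `U`-WLL DCTRS over `F`, `t` a reachable term in `T(F̄,V)` whose
backtranslation `t̂` is defined, and `σ` a substitution over `F̄` whose range
consists of reachable terms.  If `Φ(σ|_{Var(t)}) = {σ'}` for some substitution
`σ'`, then `Φ((t̂)‾σ) = { t̂σ' }`. -/
theorem Phi_hat_bar_subst {F V : Type} [DecidableEq V]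
    (R : CTRS F V) (ar mOf : F → ℕ) (idx : CRule F V → ℕ)
    (hS : GoodSetup R ar mOf idx) (hD : IsDCTRS R) (hU : IsUWLL R)
    (t : STerm F V) (ht : SRReachable R ar mOf idx t)
    (σ : WVar V → STerm F V)
    (hσ : ∀ x : WVar V, σ x ≠ .var x → SRReachable R ar mOf idx (σ x))
    (u : Term F V) (hu : hatT ar t = some u)
    (σ' : WVar V → Term (UF F V) (WVar V))
    (h1 : PhiSub R ar mOf idx (restrictTo σ t) σ')
    (h2 : ∀ σ'', PhiSub R ar mOf idx (restrictTo σ t) σ'' → σ'' = σ') :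
    Phi R ar mOf idx ((barT mOf u).subst σ) = {(liftUV u).subst σ'} :=
  Phi_hat_bar_subst_general R ar mOf idx t (ht.wf hS hD) σ u hu σ' h1 h2
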